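/- Let G be a finite group and k a field of characteristic p > 0 dividing |G|, and let E_1,…,E_t be the elementary abelian p-subgroups of G furnished by the filtration theorem (there is a kG-module V and a filtration of k ⊕ V with subquotients induced from the E_i). Then the bounded derived category D^f(kG) of finitely generated kG-modules satisfies D^f(kG) = Thick_G(⊕_{i=1}^t k↑_{E_i}^G), the smallest thick subcategory containing the direct sum of the modules induced from the trivial modules of the E_i. -/

import Mathlib

set_option synthInstance.maxHeartbeats 400000
set_option maxHeartbeats 1000000

open CategoryTheory Limits

section DerivedThick

variable {A : Type*} [Category A] [Abelian A]

/-- Two cochain complexes are isomorphic in the derived category iff they are connected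
by a zig-zag of quasi-isomorphisms. -/
def DIso (K L : CochainComplex A ℤ) : Prop :=
  Relation.ReflTransGen
    (fun X Y => (∃ f : X ⟶ Y, QuasiIso f) ∨ (∃ g : Y ⟶ X, QuasiIso g)) K L

/-- A class of cochain complexes is *thick* if, regarded as a (strictly full) subcategory
of the derived category, it contains `0`, is closed under isomorphism in the derived
category, under shift, satisfies two-out-of-three for mapping cone triangles, and is
closed under direct summands. -/
def IsThickC (C : Set (CochainComplex A ℤ)) : Prop :=
  (∃ Z, Limits.IsZero Z ∧ Z ∈ C)
    ∧ (∀ K L : CochainComplex A ℤ, DIso K L → K ∈ C → L ∈ C)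
    ∧ (∀ K : CochainComplex A ℤ, K ∈ C → K⟦(1 : ℤ)⟧ ∈ C)
    ∧ (∀ K : CochainComplex A ℤ, K⟦(1 : ℤ)⟧ ∈ C → K ∈ C)
    ∧ (∀ (K L : CochainComplex A ℤ) (f : K ⟶ L), K ∈ C → L ∈ C →
        CochainComplex.mappingCone f ∈ C)
    ∧ (∀ (K L : CochainComplex A ℤ) (f : K ⟶ L), K ∈ C →
        CochainComplex.mappingCone f ∈ C → L ∈ C)
    ∧ (∀ (K L : CochainComplex A ℤ) (f : K ⟶ L), L ∈ C →
        CochainComplex.mappingCone f ∈ C → K ∈ C)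
    ∧ (∀ K L : CochainComplex A ℤ, (K ⊞ L) ∈ C → K ∈ C ∧ L ∈ C)

/-- The smallest thick subcategory of the derived category containing `N`. -/
def thickGenC (N : CochainComplex A ℤ) : Set (CochainComplex A ℤ) :=
  {M | ∀ C : Set (CochainComplex A ℤ), IsThickC C → N ∈ C → M ∈ C}

end DerivedThick

section RepComplexes

variable {k : Type} [Field k] {G : Type} [Group G]

/-- A complex of representations belongs to the bounded derived category `D^f(kG)` of
finitely generated `kG`-modules: it is bounded and has finite dimensional homology. -/
def IsDfRep (K : CochainComplex (Rep k G) ℤ) : Prop :=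
  (∀ i : ℤ, FiniteDimensional k (K.homology i).V)
    ∧ ∃ a b : ℤ, ∀ i : ℤ, (i < a ∨ b < i) → Subsingleton (K.homology i).V

end RepComplexes

variable {k : Type} [Field k] {G : Type} [Group G]

/-- A subgroup is elementary abelian for the prime `p` if it is commutative and every
element has order dividing `p`. -/
def IsElementaryAbelian (p : ℕ) (E : Subgroup G) : Prop :=
  (∀ x ∈ E, x ^ p = 1) ∧ ∀ x ∈ E, ∀ y ∈ E, x * y = y * x

/-- A representation `(Q, σ)` of `G` over `k` is induced from a representation of the
subgroup `E`, `Q ≅ W↑_E^G = kG ⊗_{kE} W`, if and only if it admits an `E`-stable subspace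
`W` such that `Q` is the (internal) direct sum of the translates `g • W`, one for each
left coset `g E` of `E` in `G` (imprimitivity). -/
def IsInducedFrom {Q : Type} [AddCommGroup Q] [Module k Q]
    (σ : Representation k G Q) (E : Subgroup G) : Prop :=
  ∃ W : Submodule k Q,
    (∀ e ∈ E, W.map (σ e) = W)
    ∧ iSupIndep (fun c : G ⧸ E => W.map (σ (Quotient.out c)))
    ∧ (⨆ c : G ⧸ E, W.map (σ (Quotient.out c))) = ⊤

/-- The representation of `G` on `k ⊕ V`, acting trivially on `k`. -/
noncomputable def trivProdRep {V : Type} [AddCommGroup V] [Module k V]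
    (ρ : Representation k G V) : Representation k G (k × V) where
  toFun g := (LinearMap.id : k →ₗ[k] k).prodMap (ρ g)
  map_one' := by
    apply LinearMap.ext
    intro x
    simp [Prod.ext_iff]
  map_mul' g h := by
    apply LinearMap.ext
    intro x
    simp [Prod.ext_iff]

noncomputable instance {k : Type} [Field k] {G : Type} [Group G] :
    CategoryTheory.Limits.HasFiniteBiproducts (Rep k G) :=
  CategoryTheory.Limits.HasFiniteBiproducts.of_hasFiniteProducts

/-- A representation `(Q, σ)` of `G` is induced from the trivial one-dimensional
representation `k` of the subgroup `E`, i.e. `Q ≅ k↑_E^G`: the imprimitivity criterion,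
where the distinguished `E`-stable line is fixed pointwise by `E`. -/
def IsInducedFromTrivial {k : Type} [Field k] {G : Type} [Group G]
    {Q : Type} [AddCommGroup Q] [Module k Q]
    (σ : Representation k G Q) (E : Subgroup G) : Prop :=
  ∃ W : Submodule k Q,
    Module.finrank k W = 1
    ∧ (∀ e ∈ E, ∀ w ∈ W, σ e w = w)
    ∧ iSupIndep (fun c : G ⧸ E => W.map (σ (Quotient.out c)))
    ∧ (⨆ c : G ⧸ E, W.map (σ (Quotient.out c))) = ⊤

section Devissage

variable {A : Type*} [Category A] [Abelian A]

namespace DIso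

lemma of_quasiIso {K L : CochainComplex A ℤ} (f : K ⟶ L) [QuasiIso f] : DIso K L :=
  Relation.ReflTransGen.single (Or.inl ⟨f, inferInstance⟩)

lemma of_quasiIso_inv {K L : CochainComplex A ℤ} (f : K ⟶ L) [QuasiIso f] : DIso L K :=
  Relation.ReflTransGen.single (Or.inr ⟨f, inferInstance⟩)

lemma of_iso {K L : CochainComplex A ℤ} (e : K ≅ L) : DIso K L :=
  of_quasiIso e.hom

end DIso

namespace IsThickC

variable {C : Set (CochainComplex A ℤ)} (hC : IsThickC C)
include hC

lemma mem_of_dIso {K L : CochainComplex A ℤ} (h : DIso K L) (hK : K ∈ C) : L ∈ C :=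
  hC.2.1 K L h hK

lemma mem_of_iso {K L : CochainComplex A ℤ} (e : K ≅ L) (hK : K ∈ C) : L ∈ C :=
  hC.mem_of_dIso (.of_iso e) hK

lemma mem_of_isZero {K : CochainComplex A ℤ} (hK : IsZero K) : K ∈ C := by
  obtain ⟨Z, hZ, hZC⟩ := hC.1
  exact hC.mem_of_iso (hZ.iso hK) hZC

lemma mem_of_acyclic {K : CochainComplex A ℤ} (hK : K.Acyclic) : K ∈ C := by
  obtain ⟨Z, hZ, hZC⟩ := hC.1
  have : QuasiIso (0 : K ⟶ Z) := by
    rw [quasiIso_iff]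
    intro i
    rw [quasiIsoAt_iff_exactAt _ _ (hK i)]
    exact ShortComplex.exact_of_isZero_X₂ _ ((HomologicalComplex.eval A _ i).map_isZero hZ)
  exact hC.mem_of_dIso (.of_quasiIso_inv (0 : K ⟶ Z)) hZC

lemma mem_shift_iff (K : CochainComplex A ℤ) (n : ℤ) : K⟦n⟧ ∈ C ↔ K ∈ C := by
  have step (m : ℤ) : K⟦m + 1⟧ ∈ C ↔ K⟦m⟧ ∈ C := by
    constructor
    · intro h
      exact hC.2.2.2.1 _ (hC.mem_of_iso ((shiftFunctorAdd _ m 1).app K) h)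
    · intro h
      exact hC.mem_of_iso ((shiftFunctorAdd _ m 1).app K).symm (hC.2.2.1 _ h)
  induction n using Int.induction_on with
  | zero =>
    exact ⟨hC.mem_of_iso ((shiftFunctorZero _ ℤ).app K),
      hC.mem_of_iso ((shiftFunctorZero _ ℤ).app K).symm⟩
  | succ m ih => exact (step m).trans ih
  | pred m ih =>
    have := step (-(m : ℤ) - 1)
    rw [sub_add_cancel] at this
    exact this.symm.trans ih

lemma mappingCone_mem_iff {S : ShortComplex (CochainComplex A ℤ)} (hS : S.ShortExact) :
    CochainComplex.mappingCone S.f ∈ C ↔ S.X₃ ∈ C := by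
  have := CochainComplex.mappingCone.quasiIso_descShortComplex hS
  exact ⟨hC.mem_of_dIso (.of_quasiIso (CochainComplex.mappingCone.descShortComplex S)),
    hC.mem_of_dIso (.of_quasiIso_inv (CochainComplex.mappingCone.descShortComplex S))⟩

lemma mem_X₂_of_shortExact {S : ShortComplex (CochainComplex A ℤ)} (hS : S.ShortExact)
    (h₁ : S.X₁ ∈ C) (h₃ : S.X₃ ∈ C) : S.X₂ ∈ C :=
  hC.2.2.2.2.2.1 _ _ S.f h₁ ((hC.mappingCone_mem_iff hS).2 h₃)

lemma mem_of_retract {K L : CochainComplex A ℤ} (r : Retract K L) (hL : L ∈ C) : K ∈ C := by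
  have hS : (ShortComplex.mk r.i (cokernel.π r.i) (by simp)).ShortExact :=
    { exact := ShortComplex.exact_cokernel r.i
      mono_f := inferInstanceAs (Mono r.i)
      epi_g := inferInstanceAs (Epi (cokernel.π r.i)) }
  have s := ShortComplex.Splitting.ofExactOfRetraction _ hS.exact r.r r.retract hS.epi_g
  exact (hC.2.2.2.2.2.2.2 _ _ (hC.mem_of_iso s.isoBinaryBiproduct hL)).1

lemma single_mem {X : A} (hX : (HomologicalComplex.single A (ComplexShape.up ℤ) 0).obj X ∈ C)
    (n : ℤ) : (HomologicalComplex.single A (ComplexShape.up ℤ) n).obj X ∈ C := by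
  rw [← hC.mem_shift_iff _ n]
  exact hC.mem_of_iso
    (((CochainComplex.singleFunctors A).shiftIso n 0 n (by simp)).app X).symm hX

lemma mem_of_isGE_of_isLE {K : CochainComplex A ℤ} (n : ℤ) [K.IsGE n] [K.IsLE n]
    (h : (HomologicalComplex.single A (ComplexShape.up ℤ) 0).obj (K.homology n) ∈ C) :
    K ∈ C := by
  have : (K.truncLE n).IsGE n := by
    rw [CochainComplex.isGE_iff]
    intro i hi
    have := K.quasiIsoAt_ιTruncLE n i hi.le
    rw [quasiIsoAt_iff_exactAt' (K.ιTruncLE n) i (K.exactAt_of_isGE n i hi)] at this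
    exact this
  obtain ⟨Y, ⟨e⟩⟩ := CochainComplex.exists_iso_single ((K.truncLE n).truncGE n) n
  let f := (K.truncLE n).πTruncGE n ≫ e.hom
  have eY : Y ≅ K.homology n :=
    (HomologicalComplex.singleObjHomologySelfIso (ComplexShape.up ℤ) n Y).symm ≪≫
      (isoOfQuasiIsoAt f n).symm ≪≫ isoOfQuasiIsoAt (K.ιTruncLE n) n
  refine hC.mem_of_dIso (.of_quasiIso (K.ιTruncLE n)) (hC.mem_of_dIso (.of_quasiIso_inv f) ?_)
  exact hC.single_mem (hC.mem_of_iso ((HomologicalComplex.single A _ 0).mapIso eY.symm) h) n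

/-- A thick class of complexes which contains the cohomology objects of a complex with bounded
cohomology contains this complex. -/
lemma mem_of_homology_mem {K : CochainComplex A ℤ} (a b : ℤ) [K.IsGE a] [K.IsLE b]
    (h : ∀ i, (HomologicalComplex.single A (ComplexShape.up ℤ) 0).obj (K.homology i) ∈ C) :
    K ∈ C := by
  obtain ⟨n, hn⟩ : ∃ n : ℕ, b < a + n := ⟨(b + 1 - a).toNat, by lia⟩
  induction n generalizing K b with
  | zero =>
    refine hC.mem_of_acyclic fun i ↦ ?_
    by_cases hi : i < a
    · exact K.exactAt_of_isGE a i
    · exact K.exactAt_of_isLE b i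
  | succ n ih =>
    have : K.IsLE (a + n) := K.isLE_of_le b _ (by lia)
    have hle (i : ℤ) (hi : i ≤ a + n - 1) :
        Nonempty ((K.truncLE (a + n - 1)).homology i ≅ K.homology i) := by
      have := K.quasiIsoAt_ιTruncLE (a + n - 1) i hi
      exact ⟨isoOfQuasiIsoAt (K.ιTruncLE (a + n - 1)) i⟩
    have hge (i : ℤ) (hi : a + n ≤ i) :
        Nonempty (K.homology i ≅ (K.truncGE (a + n)).homology i) := by
      have := K.quasiIsoAt_πTruncGE (a + n) i hi
      exact ⟨isoOfQuasiIsoAt (K.πTruncGE (a + n)) i⟩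
    refine hC.mem_X₂_of_shortExact (K.shortComplexTruncLE_shortExact (a + n - 1)) ?_ ?_
    · have : (K.truncLE (a + n - 1)).IsGE a := by
        rw [CochainComplex.isGE_iff]
        intro i hi
        rw [HomologicalComplex.exactAt_iff_isZero_homology]
        by_cases hi' : i ≤ a + n - 1
        · exact (K.isZero_of_isGE a i).of_iso (hle i hi').some
        · exact CochainComplex.isZero_of_isLE _ (a + n - 1) i
      refine ih (K := K.truncLE (a + n - 1)) (a + n - 1) (fun i ↦ ?_) (by lia)
      by_cases hi : i ≤ a + n - 1
      · exact hC.mem_of_iso ((HomologicalComplex.single A _ 0).mapIso (hle i hi).some.symm) (h i)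
      · exact hC.mem_of_isZero ((HomologicalComplex.single A _ 0).map_isZero
          (CochainComplex.isZero_of_isLE _ (a + n - 1) i))
    · have : (K.truncGE (a + n)).IsLE (a + n) := by
        rw [CochainComplex.isLE_iff]
        intro i hi
        rw [HomologicalComplex.exactAt_iff_isZero_homology]
        exact (K.isZero_of_isLE (a + n) i).of_iso (hge i hi.le).some.symm
      refine hC.mem_of_dIso
        (.of_quasiIso_inv (K.shortComplexTruncLEX₃ToTruncGE (a + n - 1) (a + n))) ?_
      exact hC.mem_of_isGE_of_isLE (a + n)
        (hC.mem_of_iso ((HomologicalComplex.single A _ 0).mapIso (hge _ le_rfl).some) (h _))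

end IsThickC

end Devissage

section InducedRepresentations

/-- A linear endomorphism `π` of a representation `σ` of `G` such that `σ` is the direct sum of the
translates of the range of `π` indexed by `G ⧸ E`, with `π` the projection onto the summand
corresponding to the trivial coset. -/
structure IsInducingProjection {X : Type*} [AddCommGroup X] [Module k X]
    (σ : Representation k G X) (E : Subgroup G) [Fintype (G ⧸ E)] (π : X →ₗ[k] X) : Prop where
  idem (x : X) : π (π x) = π x
  comm {e : G} (he : e ∈ E) (x : X) : π (σ e x) = σ e (π x)
  orth {g : G} (hg : g ∉ E) (x : X) : π (σ g (π x)) = 0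
  sum_eq (x : X) : ∑ c : G ⧸ E, σ c.out (π (σ c.out⁻¹ x)) = x

lemma exists_isInducingProjection {X : Type*} [AddCommGroup X] [Module k X]
    (σ : Representation k G X) (E : Subgroup G) [Fintype (G ⧸ E)] (W : Submodule k X)
    (hW : ∀ e ∈ E, ∀ w ∈ W, σ e w ∈ W)
    (hind : iSupIndep (fun c : G ⧸ E => W.map (σ (Quotient.out c))))
    (htop : (⨆ c : G ⧸ E, W.map (σ (Quotient.out c))) = ⊤) :
    ∃ π : X →ₗ[k] X, IsInducingProjection σ E π ∧ LinearMap.range π = W := by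
  have hmem (g : G) {w : X} (hw : w ∈ W) : σ g w ∈ W.map (σ (Quotient.out (g : G ⧸ E))) := by
    obtain ⟨h, hh⟩ := QuotientGroup.mk_out_eq_mul E g
    refine ⟨σ (h : G)⁻¹ w, hW _ (E.inv_mem h.2) _ hw, ?_⟩
    rw [hh, map_mul, Module.End.mul_apply, ← Module.End.mul_apply, ← Module.End.mul_apply,
      ← map_mul, ← map_mul]
    simp
  have hone : W.map (σ (Quotient.out ((1 : G) : G ⧸ E))) = W := by
    refine le_antisymm ?_ fun w hw ↦ by simpa using hmem 1 hw
    rintro _ ⟨w, hw, rfl⟩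
    obtain ⟨h, hh⟩ := QuotientGroup.mk_out_eq_mul E (1 : G)
    exact hW _ (by simp [hh]) _ hw
  set U : Submodule k X := ⨆ (c : G ⧸ E) (_ : c ≠ ((1 : G) : G ⧸ E)), W.map (σ (Quotient.out c))
  have hWU : IsCompl W U := by
    have hd : Disjoint (W.map (σ (Quotient.out ((1 : G) : G ⧸ E)))) U := hind _
    rw [hone] at hd
    refine ⟨hd, codisjoint_iff.2 (top_le_iff.1 (htop ▸ iSup_le fun c ↦ ?_))⟩
    by_cases hc : c = ((1 : G) : G ⧸ E)
    · rw [hc, hone]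
      exact le_sup_left
    · exact le_sup_of_le_right (le_iSup₂_of_le c hc le_rfl)
  let π : X →ₗ[k] X := W.subtype ∘ₗ W.projectionOnto U hWU
  have hπW (x : X) : π x ∈ W := Subtype.prop _
  have hπ₁ {w : X} (hw : w ∈ W) : π w = w := by
    exact congrArg Subtype.val (Submodule.projectionOnto_apply_left hWU ⟨w, hw⟩)
  have hπ₀ {g : G} (hg : g ∉ E) {w : X} (hw : w ∈ W) : π (σ g w) = 0 := by
    have : σ g w ∈ U := by
      have hg' : (g : G ⧸ E) ≠ ((1 : G) : G ⧸ E) := by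
        rwa [ne_comm, Ne, QuotientGroup.eq, inv_one, one_mul]
      exact le_iSup₂ (f := fun (c : G ⧸ E) (_ : c ≠ ((1 : G) : G ⧸ E)) ↦ W.map (σ c.out))
        (g : G ⧸ E) hg' (hmem g hw)
    simp [π, Submodule.projectionOnto_apply_of_mem_right hWU this]
  have hext {f f' : X →ₗ[k] X} (h : ∀ (a : G), ∀ w ∈ W, f (σ a w) = f' (σ a w)) (x : X) :
      f x = f' x := by
    have hx : x ∈ ⨆ c : G ⧸ E, W.map (σ (Quotient.out c)) := htop ▸ Submodule.mem_top
    induction hx using Submodule.iSup_induction' with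
    | mem c y hy =>
      obtain ⟨w, hw, rfl⟩ := hy
      exact h _ w hw
    | zero => simp
    | add y z _ _ hy hz => simp [hy, hz]
  refine ⟨π, ⟨fun x ↦ hπ₁ (hπW x), fun {e} he ↦ ?_, fun hg x ↦ hπ₀ hg (hπW x), ?_⟩, ?_⟩
  · refine hext (f := π ∘ₗ σ e) (f' := σ e ∘ₗ π) fun a w hw ↦ ?_
    simp only [LinearMap.comp_apply]
    rw [← Module.End.mul_apply (σ e), ← map_mul σ]
    by_cases ha : a ∈ E
    · rw [hπ₁ (hW _ (E.mul_mem he ha) _ hw), hπ₁ (hW _ ha _ hw), map_mul, Module.End.mul_apply]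
    · rw [hπ₀ (fun h ↦ ha ((E.mul_mem_cancel_left he).1 h)) hw, hπ₀ ha hw, map_zero]
  · suffices ∀ x, (∑ c : G ⧸ E, σ c.out ∘ₗ π ∘ₗ σ c.out⁻¹) x = LinearMap.id (R := k) x by
      simpa using this
    refine hext fun a w hw ↦ ?_
    simp only [LinearMap.sum_apply, LinearMap.comp_apply, LinearMap.id_apply]
    rw [Finset.sum_eq_single (a : G ⧸ E)]
    · have h : (Quotient.out (a : G ⧸ E))⁻¹ * a ∈ E := by
        rw [← QuotientGroup.eq]
        exact QuotientGroup.out_eq' _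
      rw [← Module.End.mul_apply (σ (Quotient.out (a : G ⧸ E))⁻¹), ← map_mul, hπ₁ (hW _ h _ hw),
        ← Module.End.mul_apply, ← map_mul]
      simp
    · intro c _ hc
      have h : c.out⁻¹ * a ∉ E := by
        rw [← QuotientGroup.eq]
        exact fun h ↦ hc ((QuotientGroup.out_eq' c).symm.trans h)
      rw [← Module.End.mul_apply (σ c.out⁻¹), ← map_mul, hπ₀ h hw, map_zero]
    · simp
  · refine le_antisymm ?_ fun w hw ↦ ⟨w, hπ₁ hw⟩
    rintro _ ⟨x, rfl⟩
    exact hπW x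

lemma IsInducedFrom.exists_isInducingProjection {X : Type} [AddCommGroup X] [Module k X]
    {σ : Representation k G X} {E : Subgroup G} [Fintype (G ⧸ E)] (h : IsInducedFrom σ E) :
    ∃ π : X →ₗ[k] X, IsInducingProjection σ E π := by
  obtain ⟨W, hW, hind, htop⟩ := h
  obtain ⟨π, hπ, -⟩ := _root_.exists_isInducingProjection σ E W
    (fun e he w hw ↦ hW e he ▸ Submodule.mem_map_of_mem hw) hind htop
  exact ⟨π, hπ⟩

lemma IsInducedFromTrivial.exists_isInducingProjection {X : Type} [AddCommGroup X] [Module k X]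
    {σ : Representation k G X} {E : Subgroup G} [Fintype (G ⧸ E)]
    (h : IsInducedFromTrivial σ E) :
    ∃ π : X →ₗ[k] X, IsInducingProjection σ E π ∧ ∃ (w : X) (l : X →ₗ[k] k),
      w ≠ 0 ∧ π w = w ∧ (∀ e ∈ E, σ e w = w) ∧ ∀ x, π x = l x • w := by
  obtain ⟨W, hrank, hW, hind, htop⟩ := h
  obtain ⟨π, hπ, hrange⟩ := _root_.exists_isInducingProjection σ E W
    (fun e he w hw ↦ (hW e he w hw).symm ▸ hw) hind htop
  have : Module.Finite k W := Module.finite_of_finrank_eq_succ hrank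
  let b := Module.finBasisOfFinrankEq k W hrank
  have hmem (x : X) : π x ∈ W := hrange ▸ LinearMap.mem_range_self π x
  refine ⟨π, hπ, b 0, b.coord 0 ∘ₗ π.codRestrict W hmem, ?_, ?_, fun e he ↦ hW e he _ (b 0).2, ?_⟩
  · simpa using b.ne_zero 0
  · obtain ⟨x, hx⟩ : (b 0 : X) ∈ LinearMap.range π := hrange ▸ (b 0).2
    rw [← hx, hπ.idem]
  · intro x
    simpa using congrArg Subtype.val (b.sum_repr (π.codRestrict W hmem x)).symm

namespace IsInducingProjection

variable {X : Type*} [AddCommGroup X] [Module k X] {σ : Representation k G X} {E : Subgroup G}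
  [Fintype (G ⧸ E)] {π : X →ₗ[k] X}

lemma quotient (hπ : IsInducingProjection σ E π) (N : Submodule k X)
    (hN : ∀ g, N ≤ N.comap (σ g)) (hNπ : N ≤ N.comap π) :
    IsInducingProjection (σ.quotient N hN) E (N.mapQ N π hNπ) where
  idem x := by
    obtain ⟨x, rfl⟩ := N.mkQ_surjective x
    simp [hπ.idem]
  comm he x := by
    obtain ⟨x, rfl⟩ := N.mkQ_surjective x
    simp [hπ.comm he]
  orth hg x := by
    obtain ⟨x, rfl⟩ := N.mkQ_surjective x
    simp [hπ.orth hg]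
  sum_eq x := by
    obtain ⟨x, rfl⟩ := N.mkQ_surjective x
    simpa using congrArg N.mkQ (hπ.sum_eq x)

lemma tprod {Y : Type*} [AddCommGroup Y] [Module k Y] (τ : Representation k G Y)
    (hπ : IsInducingProjection σ E π) :
    IsInducingProjection (τ.tprod σ) E (π.lTensor Y) where
  idem x := by
    induction x with
    | zero => simp
    | tmul y x => simp [hπ.idem]
    | add _ _ h h' => simp only [map_add, h, h']
  comm he x := by
    induction x with
    | zero => simp
    | tmul y x => simp [hπ.comm he]
    | add _ _ h h' => simp only [map_add, h, h']
  orth hg x := by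
    induction x with
    | zero => simp
    | tmul y x => simp [hπ.orth hg]
    | add _ _ h h' => simp only [map_add, h, h', add_zero]
  sum_eq x := by
    induction x with
    | zero => simp
    | tmul y x => simp [← TensorProduct.tmul_sum, hπ.sum_eq]
    | add _ _ hy hz => simp only [map_add, Finset.sum_add_distrib, hy, hz]

/-- Elementary abelian `p`-groups have nonzero fixed vectors in characteristic `p`. -/
lemma exists_fixed_vector [Finite G] [Nontrivial X] (hπ : IsInducingProjection σ E π)
    (p : ℕ) [Fact p.Prime] [CharP k p] (hE : IsElementaryAbelian p E) :
    ∃ w : X, w ≠ 0 ∧ π w = w ∧ ∀ e ∈ E, σ e w = w := by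
  suffices ∀ T : Finset G, (∀ e ∈ T, e ∈ E) →
      ∃ w : X, w ≠ 0 ∧ π w = w ∧ ∀ e ∈ T, σ e w = w by
    obtain ⟨w, hw₀, hw, h⟩ := this (Set.toFinite (E : Set G)).toFinset (by simp)
    exact ⟨w, hw₀, hw, fun e he ↦ h e (by simpa using he)⟩
  intro T
  classical
  induction T using Finset.induction_on with
  | empty =>
    intro _
    by_contra! h
    obtain ⟨x, hx⟩ := exists_ne (0 : X)
    have hπ₀ (y : X) : π y = 0 := by
      by_contra hy
      simpa using h _ hy (hπ.idem y)
    exact hx (by simpa [hπ₀] using (hπ.sum_eq x).symm)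
  | insert e T _ ih =>
    intro hT
    obtain ⟨w, hw₀, hw, hwT⟩ := ih fun a ha ↦ hT a (Finset.mem_insert_of_mem ha)
    have he : e ∈ E := hT e (Finset.mem_insert_self e T)
    have hnil : (σ e - 1) ^ p = 0 := by
      have : CharP (Module.End k X) p :=
        charP_of_injective_algebraMap (algebraMap k (Module.End k X)).injective p
      rw [sub_pow_char_of_commute p (Commute.one_right _), ← map_pow, hE.1 e he]
      simp
    have hex : ∃ n : ℕ, ((σ e - 1) ^ n) w = 0 := ⟨p, by simp [hnil]⟩
    obtain ⟨n, hn⟩ : ∃ n, Nat.find hex = n + 1 :=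
      Nat.exists_eq_succ_of_ne_zero fun h ↦ hw₀ (by simpa [h] using Nat.find_spec hex)
    have hfix (f : Module.End k X) (hf : Commute f (σ e)) (hfw : f w = w) :
        f (((σ e - 1) ^ n) w) = ((σ e - 1) ^ n) w := by
      rw [← Module.End.mul_apply, ((hf.sub_right (Commute.one_right f)).pow_right n).eq,
        Module.End.mul_apply, hfw]
    refine ⟨((σ e - 1) ^ n) w, Nat.find_min hex (by lia), hfix π ?_ hw, fun a ha ↦ ?_⟩
    · exact LinearMap.ext fun x ↦ hπ.comm he x
    · rcases Finset.mem_insert.1 ha with rfl | ha'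
      · have := Nat.find_spec hex
        rw [hn, pow_succ', Module.End.mul_apply] at this
        simpa [sub_eq_zero] using this
      · refine hfix (σ a) ?_ (hwT a ha')
        rw [Commute, SemiconjBy, ← map_mul, ← map_mul, hE.2 a (hT a ha) e he]

end IsInducingProjection

/-- The morphism out of a representation induced from the trivial representation of `E` which is
associated to a vector fixed by `E`. -/
lemma exists_intertwining_of_fixed_vector {Y X : Type*} [AddCommGroup Y] [Module k Y]
    [AddCommGroup X] [Module k X] {τ : Representation k G Y} {σ : Representation k G X}
    {E : Subgroup G} [Fintype (G ⧸ E)] {π' : Y →ₗ[k] Y} {π : X →ₗ[k] X}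
    (hπ' : IsInducingProjection τ E π') (hπ : IsInducingProjection σ E π)
    {w' : Y} {l : Y →ₗ[k] k} (hw'₀ : w' ≠ 0) (hπw' : π' w' = w') (hw' : ∀ e ∈ E, τ e w' = w')
    (hl : ∀ y, π' y = l y • w')
    {w : X} (hw₀ : w ≠ 0) (hπw : π w = w) (hw : ∀ e ∈ E, σ e w = w) :
    ∃ f : Y →ₗ[k] X, (∀ g y, f (τ g y) = σ g (f y)) ∧ Function.Injective f ∧
      ∀ y, f (π' y) = π (f y) := by
  have hlE {e : G} (he : e ∈ E) (y : Y) : l (τ e y) = l y := by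
    have h := hπ'.comm he y
    rw [hl, hl, map_smul, hw' e he] at h
    exact smul_left_injective k hw'₀ h
  have hout (y : Y) {g g' : G} (h : (g : G ⧸ E) = g') :
      l (τ g⁻¹ y) • σ g w = l (τ g'⁻¹ y) • σ g' w := by
    rw [QuotientGroup.eq] at h
    have h₁ : τ g⁻¹ y = τ (g⁻¹ * g') (τ g'⁻¹ y) := by
      rw [← Module.End.mul_apply, ← map_mul]
      simp
    have h₂ : σ g' w = σ g (σ (g⁻¹ * g') w) := by
      rw [← Module.End.mul_apply, ← map_mul]
      simp
    rw [h₁, hlE h, h₂, hw _ h]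
  let f : Y →ₗ[k] X := ∑ c : G ⧸ E, (l ∘ₗ τ c.out⁻¹).smulRight (σ c.out w)
  have hf (y : Y) : f y = ∑ c : G ⧸ E, l (τ c.out⁻¹ y) • σ c.out w := by simp [f]
  have hfg (g : G) (y : Y) : f (τ g y) = σ g (f y) := by
    rw [hf, hf, map_sum, 
      ← Equiv.sum_comp (MulAction.toPerm g : Equiv.Perm (G ⧸ E))]
    refine Finset.sum_congr rfl fun c _ ↦ ?_
    have h : (((MulAction.toPerm g : Equiv.Perm (G ⧸ E)) c).out : G ⧸ E) = (g * c.out : G) := by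
      rw [QuotientGroup.out_eq', MulAction.toPerm_apply]
      conv_lhs => rw [← QuotientGroup.out_eq' c]
      rfl
    rw [hout _ h, map_smul, map_mul σ, Module.End.mul_apply, ← Module.End.mul_apply (τ _),
      ← map_mul τ]
    simp
  have hπf (y : Y) : π (f y) = l y • w := by
    rw [hf, map_sum, Finset.sum_eq_single ((1 : G) : G ⧸ E)]
    · rw [hout y (QuotientGroup.out_eq' _)]
      simp [hπw]
    · intro c _ hc
      rw [map_smul, ← hπw, hπ.orth, smul_zero]
      intro h
      refine hc ((QuotientGroup.out_eq' c).symm.trans ?_)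
      rw [eq_comm, QuotientGroup.eq]
      simpa using h
    · simp
  refine ⟨f, hfg, ?_, fun y ↦ ?_⟩
  · rw [injective_iff_map_eq_zero]
    intro y hy
    have hly (g : G) : l (τ g y) = 0 := by
      have h := hπf (τ g y)
      rw [hfg, hy, map_zero, map_zero, eq_comm] at h
      exact (smul_eq_zero.1 h).resolve_right hw₀
    rw [← hπ'.sum_eq y]
    simp [hl, hly]
  · have hfw' : f w' = w := by
      rw [hf, Finset.sum_eq_single ((1 : G) : G ⧸ E)]
      · rw [hout w' (QuotientGroup.out_eq' _)]
        have h := hl w'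
        rw [hπw'] at h
        have : l w' = 1 := smul_left_injective k hw'₀ (by simpa using h.symm)
        simp [this]
      · intro c _ hc
        have h : c.out⁻¹ ∉ E := fun h ↦ hc <| (QuotientGroup.out_eq' c).symm.trans <| by
          rw [QuotientGroup.eq]
          simpa using h
        have h' := hπ'.orth h w'
        rw [hπw', hl] at h'
        rw [(smul_eq_zero.1 h').resolve_right hw'₀, zero_smul]
      · simp
    rw [hl, map_smul, hfw', hπf]

end InducedRepresentations

section ThickRepresentations

variable {C : Set (CochainComplex (Rep k G) ℤ)}

/-- A representation belongs to a class of complexes if the complex given by this representation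
placed in degree zero does. -/
def MemRep (C : Set (CochainComplex (Rep k G) ℤ)) {X : Type} [AddCommGroup X] [Module k X]
    (σ : Representation k G X) : Prop :=
  (HomologicalComplex.single (Rep k G) (ComplexShape.up ℤ) 0).obj (Rep.of σ) ∈ C

namespace IsThickC

lemma memRep_of_subsingleton (hC : IsThickC C) {X : Type} [AddCommGroup X] [Module k X]
    [Subsingleton X] (σ : Representation k G X) : MemRep C σ := by
  refine hC.mem_of_isZero ((HomologicalComplex.single (Rep k G) _ 0).map_isZero ?_)
  rw [IsZero.iff_id_eq_zero]
  ext x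
  exact Subsingleton.elim (α := X) _ _

lemma memRep_of_exact (hC : IsThickC C) {X Y Z : Type} [AddCommGroup X] [Module k X]
    [AddCommGroup Y] [Module k Y] [AddCommGroup Z] [Module k Z]
    {ρ : Representation k G X} {σ : Representation k G Y} {τ : Representation k G Z}
    (f : X →ₗ[k] Y) (hf : ∀ g x, f (ρ g x) = σ g (f x)) (hf' : Function.Injective f)
    (h : Y →ₗ[k] Z) (hh : ∀ g y, h (σ g y) = τ g (h y)) (hh' : Function.Surjective h)
    (hfh : Function.Exact f h) (hρ : MemRep C ρ) (hτ : MemRep C τ) : MemRep C σ := by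
  let φ : Rep.of ρ ⟶ Rep.of σ := Rep.ofHom (f.intertwiningMap_of_isIntertwiningMap ρ σ hf)
  let ψ : Rep.of σ ⟶ Rep.of τ := Rep.ofHom (h.intertwiningMap_of_isIntertwiningMap σ τ hh)
  let S : ShortComplex (Rep k G) := ShortComplex.mk φ ψ <| by
    ext x
    exact hfh.apply_apply_eq_zero x
  have hS : S.ShortExact :=
    { exact := by
        rw [← ShortComplex.exact_map_iff_of_faithful S (forget₂ (Rep k G) (ModuleCat k)),
          ShortComplex.moduleCat_exact_iff]
        intro y hy
        exact (hfh y).1 hy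
      mono_f := (Rep.mono_iff_injective _).2 hf'
      epi_g := (Rep.epi_iff_surjective _).2 hh' }
  exact hC.mem_X₂_of_shortExact
    (hS.map_of_exact (HomologicalComplex.single (Rep k G) (ComplexShape.up ℤ) 0)) hρ hτ

lemma memRep_of_retract (hC : IsThickC C) {X Y : Type} [AddCommGroup X] [Module k X]
    [AddCommGroup Y] [Module k Y] {ρ : Representation k G X} {σ : Representation k G Y}
    (f : X →ₗ[k] Y) (hf : ∀ g x, f (ρ g x) = σ g (f x))
    (h : Y →ₗ[k] X) (hh : ∀ g y, h (σ g y) = ρ g (h y))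
    (hfh : ∀ x, h (f x) = x) (hσ : MemRep C σ) : MemRep C ρ := by
  let r : Retract (Rep.of ρ) (Rep.of σ) :=
    { i := Rep.ofHom (f.intertwiningMap_of_isIntertwiningMap ρ σ hf)
      r := Rep.ofHom (h.intertwiningMap_of_isIntertwiningMap σ ρ hh)
      retract := by
        ext x
        exact hfh x }
  exact hC.mem_of_retract (r.map (HomologicalComplex.single (Rep k G) _ 0)) hσ

lemma memRep_of_isInducingProjection [Finite G] (hC : IsThickC C) (p : ℕ) [Fact p.Prime]
    [CharP k p] {E : Subgroup G} [Fintype (G ⧸ E)] (hE : IsElementaryAbelian p E)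
    {Y : Type} [AddCommGroup Y] [Module k Y] {τ : Representation k G Y}
    (hτ : IsInducedFromTrivial τ E) (hτC : MemRep C τ)
    {X : Type} [AddCommGroup X] [Module k X] [FiniteDimensional k X]
    {σ : Representation k G X} {π : X →ₗ[k] X} (hπ : IsInducingProjection σ E π) :
    MemRep C σ := by
  obtain ⟨π', hπ', w', l, hw'₀, hπw', hw', hl⟩ := hτ.exists_isInducingProjection
  induction hn : Module.finrank k X using Nat.strong_induction_on generalizing X with
  | h n ih =>
    cases subsingleton_or_nontrivial X with
    | inl _ => exact hC.memRep_of_subsingleton σ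
    | inr _ =>
      obtain ⟨w, hw₀, hπw, hw⟩ := hπ.exists_fixed_vector p hE
      obtain ⟨f, hfg, hf, hfπ⟩ :=
        exists_intertwining_of_fixed_vector hπ' hπ hw'₀ hπw' hw' hl hw₀ hπw hw
      have hN (g : G) : LinearMap.range f ≤ (LinearMap.range f).comap (σ g) := by
        rintro _ ⟨y, rfl⟩
        exact ⟨τ g y, hfg g y⟩
      have hNπ : LinearMap.range f ≤ (LinearMap.range f).comap π := by
        rintro _ ⟨y, rfl⟩
        exact ⟨π' y, hfπ y⟩
      have hpos : 0 < Module.finrank k (LinearMap.range f) := by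
        have : Nontrivial (LinearMap.range f) :=
          ⟨⟨f w', w', rfl⟩, 0, fun h ↦ hw'₀ (hf (by simpa using congrArg Subtype.val h))⟩
        exact Module.finrank_pos
      refine hC.memRep_of_exact f hfg hf (LinearMap.range f).mkQ (fun g x ↦ rfl)
        (Submodule.mkQ_surjective _) (LinearMap.exact_map_mkQ_range f) hτC
        (ih _ ?_ (hπ.quotient _ hN hNπ) rfl)
      have := (LinearMap.range f).finrank_quotient_add_finrank
      lia

end IsThickC

end ThickRepresentations

/-- Let `G` be a finite group and `k` a field of characteristic `p > 0`
dividing `|G|`, and let `E_1, …, E_t` be the elementary abelian `p`-subgroups of `G`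
furnished by the filtration theorem (there is a `kG`-module `V` and a filtration of
`k ⊕ V` whose subquotients are induced from the `E_i`; the filtration and its properties
appear below as hypotheses).  Then the bounded derived category `D^f(kG)` of finitely
generated `kG`-modules satisfies `D^f(kG) = Thick_G(⊕_{i=1}^t k↑_{E_i}^G)`, the smallest
thick subcategory containing the direct sum of the modules induced from the trivial
modules of the `E_i`: every object of `D^f(kG)` lies in the thick subcategory generated
by any object `⊕_i Q_i` with `Q_i ≅ k↑_{E_i}^G`. -/
theorem df_generated_by_induced_from_elementary_abelians
    (k : Type) [Field k] (G : Type) [Group G] [Fintype G]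
    (p : ℕ) [Fact p.Prime] [CharP k p] (hdvd : p ∣ Fintype.card G)
    -- the data furnished by the filtration theorem:
    (Vr : Rep k G) (hV : FiniteDimensional k Vr.V) (t : ℕ)
    (E : Fin t → Subgroup G) (hE : ∀ i, IsElementaryAbelian p (E i))
    (M : Fin (t + 1) → Submodule k (k × Vr.V))
    (hinv : ∀ (i : Fin (t + 1)) (g : G) (x : k × Vr.V),
      x ∈ M i → trivProdRep Vr.ρ g x ∈ M i)
    (hbot : M 0 = ⊥) (htop : M (Fin.last t) = ⊤)
    (hmono : ∀ i : Fin t, M i.castSucc ≤ M i.succ)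
    (hsub : ∀ i : Fin t,
      ∃ (Qr : Rep k G) (_ : FiniteDimensional k Qr.V),
        IsInducedFrom Qr.ρ (E i) ∧
        ∃ φ : (M i.succ) →ₗ[k] Qr.V,
          Function.Surjective φ
          ∧ LinearMap.ker φ = (M i.castSucc).comap (M i.succ).subtype
          ∧ ∀ (g : G) (x : M i.succ),
              φ ⟨trivProdRep Vr.ρ g x.1, hinv i.succ g x.1 x.2⟩ = Qr.ρ g (φ x)) :
    -- the conclusion:
    ∀ (Q : Fin t → Rep k G), (∀ i, FiniteDimensional k (Q i).V) →
      (∀ i, IsInducedFromTrivial (Q i).ρ (E i)) →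
      ∀ K : CochainComplex (Rep k G) ℤ, IsDfRep K →
        K ∈ thickGenC
          ((HomologicalComplex.single (Rep k G) (ComplexShape.up ℤ) 0).obj (⨁ Q)) := by
  intro Q hQfin hQ K hK C hC hN
  have hQC (i : Fin t) : MemRep C (Q i).ρ :=
    hC.mem_of_retract
      (({ i := biproduct.ι Q i, r := biproduct.π Q i } : Retract (Q i) (⨁ Q)).map
        (HomologicalComplex.single (Rep k G) (ComplexShape.up ℤ) 0)) hN
  have hMle (i : Fin (t + 1)) (g : G) : M i ≤ (M i).comap (trivProdRep Vr.ρ g) :=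
    fun x hx ↦ hinv i g x hx
  have hfd {X : Type} [AddCommGroup X] [Module k X] [FiniteDimensional k X]
      (ρ : Representation k G X) : MemRep C ρ := by
    have hfil (i : Fin (t + 1)) :
        MemRep C (ρ.tprod ((trivProdRep Vr.ρ).subrepresentation (M i) (hMle i))) := by
      induction i using Fin.induction with
      | zero =>
        have : Subsingleton (M 0) := by
          rw [hbot]
          infer_instance
        exact hC.memRep_of_subsingleton _
      | succ i ih =>
        obtain ⟨Qr, _, hQr, φ, hφ, hker, hφg⟩ := hsub i
        have := Fintype.ofFinite (G ⧸ E i)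
        obtain ⟨π, hπ⟩ := hQr.exists_isInducingProjection
        have hexact : Function.Exact (Submodule.inclusion (hmono i)) φ := by
          rw [LinearMap.exact_iff, hker, Submodule.range_inclusion]
        refine hC.memRep_of_exact ((Submodule.inclusion (hmono i)).lTensor X) (fun g x ↦ ?_)
          (Module.Flat.lTensor_preserves_injective_linearMap _
            (Submodule.inclusion_injective (hmono i)))
          (φ.lTensor X) (fun g x ↦ ?_) (LinearMap.lTensor_surjective X hφ)
          (lTensor_exact X hexact hφ) ih
          (hC.memRep_of_isInducingProjection p (hE i) (hQ i) (hQC i) (hπ.tprod ρ))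
        · induction x with
          | zero => simp
          | tmul x m => rfl
          | add _ _ h h' => simp only [map_add, h, h']
        · induction x with
          | zero => simp
          | tmul x m => exact congrArg (ρ g x ⊗ₜ[k] ·) (hφg g m)
          | add _ _ h h' => simp only [map_add, h, h']
    have hmem (x : k × Vr.V) : x ∈ M (Fin.last t) := htop ▸ Submodule.mem_top
    refine hC.memRep_of_retract
      ((TensorProduct.mk k X (M (Fin.last t))).flip ⟨(1, 0), hmem _⟩) (fun g x ↦ ?_)
      (TensorProduct.rid k X ∘ₗ
        (LinearMap.fst k k Vr.V ∘ₗ (M (Fin.last t)).subtype).lTensor X) (fun g x ↦ ?_)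
      (fun x ↦ ?_) (hfil (Fin.last t))
    · refine congrArg (ρ g x ⊗ₜ[k] ·) (Subtype.ext ?_)
      simp [trivProdRep]
    · induction x with
      | zero => simp
      | tmul x m => simp [trivProdRep]
      | add _ _ h h' => simp only [map_add, h, h']
    · simp
  obtain ⟨hKfin, a, b, hab⟩ := hK
  have hexact (i : ℤ) (hi : i < a ∨ b < i) : K.ExactAt i := by
    rw [HomologicalComplex.exactAt_iff_isZero_homology, IsZero.iff_id_eq_zero]
    have := hab i hi
    ext x
    exact Subsingleton.elim _ _
  have : K.IsGE a := (K.isGE_iff a).2 fun i hi ↦ hexact i (Or.inl hi)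
  have : K.IsLE b := (K.isLE_iff b).2 fun i hi ↦ hexact i (Or.inr hi)
  refine hC.mem_of_homology_mem a b fun i ↦ ?_
  have := hKfin i
  exact hfd (K.homology i).ρ
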